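/- Let K be a field of characteristic zero, α, β ∈ K with β ≠ 0, and suppose λ, μ ∈ K are the roots of t² − αt − β. In A = A(α,β,0) set ω = DU − λUD and let K' = {f ∈ A : (1 + Uω)f ∈ DA}. Then K' = D²A + (DUω + λ⁻¹μω² + μ²D)A, and K' is a right ideal of A that is stably free but not free as a right A-module. -/

import Mathlib

noncomputable section

/-- Defining relations of the down-up algebra `A(α,β,γ)`:
`D = ι 0`, `U = ι 1`, relations `DU² = αUDU + βU²D + γU` and `D²U = αDUD + βUD² + γD`. -/
inductive DownUpRel (K : Type) [Field K] (a b g : K) :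
    FreeAlgebra K (Fin 2) → FreeAlgebra K (Fin 2) → Prop
  | rel1 : DownUpRel K a b g
      (FreeAlgebra.ι K (0 : Fin 2) * FreeAlgebra.ι K (1 : Fin 2) * FreeAlgebra.ι K (1 : Fin 2))
      (a • (FreeAlgebra.ι K (1 : Fin 2) * FreeAlgebra.ι K (0 : Fin 2) * FreeAlgebra.ι K (1 : Fin 2)) +
       b • (FreeAlgebra.ι K (1 : Fin 2) * FreeAlgebra.ι K (1 : Fin 2) * FreeAlgebra.ι K (0 : Fin 2)) +
       g • FreeAlgebra.ι K (1 : Fin 2))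
  | rel2 : DownUpRel K a b g
      (FreeAlgebra.ι K (0 : Fin 2) * FreeAlgebra.ι K (0 : Fin 2) * FreeAlgebra.ι K (1 : Fin 2))
      (a • (FreeAlgebra.ι K (0 : Fin 2) * FreeAlgebra.ι K (1 : Fin 2) * FreeAlgebra.ι K (0 : Fin 2)) +
       b • (FreeAlgebra.ι K (1 : Fin 2) * FreeAlgebra.ι K (0 : Fin 2) * FreeAlgebra.ι K (0 : Fin 2)) +
       g • FreeAlgebra.ι K (0 : Fin 2))

/-- The down-up algebra `A(α,β,γ)`. -/
abbrev DownUp (K : Type) [Field K] (a b g : K) := RingQuot (DownUpRel K a b g)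

/-- The generator `D` of `A(α,β,γ)`. -/
def DownUp.D (K : Type) [Field K] (a b g : K) : DownUp K a b g :=
  RingQuot.mkAlgHom K (DownUpRel K a b g) (FreeAlgebra.ι K (0 : Fin 2))

/-- The generator `U` of `A(α,β,γ)`. -/
def DownUp.U (K : Type) [Field K] (a b g : K) : DownUp K a b g :=
  RingQuot.mkAlgHom K (DownUpRel K a b g) (FreeAlgebra.ι K (1 : Fin 2))

/-- A right `A`-module `P` (realized as a left `Aᵐᵒᵖ`-module) is stably free if
`P ⊕ Aⁿ ≅ Aᵐ` as right `A`-modules for some naturals `n m`. -/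
def IsStablyFreeRight (A : Type) [Ring A] (P : Type) [AddCommGroup P] [Module Aᵐᵒᵖ P] : Prop :=
  ∃ n m : ℕ, Nonempty ((P × (Fin n → A)) ≃ₗ[Aᵐᵒᵖ] (Fin m → A))

/-- Left multiplication by `r` as an endomorphism of `A` viewed as a right `A`-module
(i.e. as a left `Aᵐᵒᵖ`-module). -/
def leftMulRight {A : Type} [Ring A] (r : A) : A →ₗ[Aᵐᵒᵖ] A where
  toFun x := r * x
  map_add' := mul_add r
  map_smul' m x := by
    simp only [MulOpposite.smul_eq_mul_unop, RingHom.id_apply, mul_assoc]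

/-- The element `ω = DU − λUD` of `A(α,β,0)`. -/
def omega0 (K : Type) [Field K] (α β lam : K) : DownUp K α β 0 :=
  DownUp.D K α β 0 * DownUp.U K α β 0 - lam • (DownUp.U K α β 0 * DownUp.D K α β 0)

/-- The right ideal `K' = {f ∈ A : (1 + Uω)f ∈ DA}` of `A = A(α,β,0)`. -/
def idealK' (K : Type) [Field K] (α β lam : K) :
    Submodule (DownUp K α β 0)ᵐᵒᵖ (DownUp K α β 0) :=
  Submodule.comap (leftMulRight (1 + DownUp.U K α β 0 * omega0 K α β lam))
    (Submodule.span (DownUp K α β 0)ᵐᵒᵖ {DownUp.D K α β 0})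

/-!
A column `(a, b)` with `(1 + Uω)a + Db = 1` splits the row `(1 + Uω, D) : A² → A`, whose kernel is
`K'`; hence `K' ⊕ A ≅ A²`, and if `K'` is free it is generated by one element `f`.

To see that there is no such `f`, embed `A` into the skew Laurent ring `K[t, w][x^{±1}; σ]` by
`D ↦ x`, with `UD = t` and `ω = w`. In the image, coefficients in negative degrees are divisible
by `t`. Since `f` left-divides `D²`, its image is a unit times `x ^ m` with `0 ≤ m ≤ 2`.
The case `m = 0` contradicts `(1 + Uω)f ∈ DA` in degree `0`; the cases `m = 1` and `m = 2`
contradict `DUω + λ⁻¹μω² + μ²D ∈ fA` in degrees `0` and `1`.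
-/

/-! ### Right ideals cut out by a unimodular row -/

section UnimodularRow

variable {S M N P : Type*} [Ring S] [AddCommGroup M] [AddCommGroup N] [AddCommGroup P]
  [Module S M] [Module S N] [Module S P]

theorem map_fst_ker_coprod (f : M →ₗ[S] P) (g : N →ₗ[S] P) :
    (LinearMap.ker (f.coprod g)).map (LinearMap.fst S M N) = (LinearMap.range g).comap f := by
  ext x
  simp only [Submodule.mem_map, LinearMap.mem_ker, LinearMap.coprod_apply, LinearMap.fst_apply,
    Prod.exists, exists_and_right, exists_eq_right, Submodule.mem_comap, LinearMap.mem_range]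
  exact ⟨fun ⟨y, hy⟩ => ⟨-y, by rw [map_neg, neg_eq_of_add_eq_zero_left hy]⟩,
    fun ⟨y, hy⟩ => ⟨-y, by rw [map_neg, hy, add_neg_cancel]⟩⟩

theorem disjoint_ker_coprod_ker_fst (f : M →ₗ[S] P) {g : N →ₗ[S] P} (hg : Function.Injective g) :
    Disjoint (LinearMap.ker (f.coprod g)) (LinearMap.ker (LinearMap.fst S M N)) := by
  rw [Submodule.disjoint_def]
  rintro ⟨x, y⟩ hxy (rfl : x = 0)
  have hy : g y = 0 := by simpa using hxy
  rw [(map_eq_zero_iff g hg).1 hy, Prod.mk_zero_zero]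

theorem nonempty_comap_range_prod_linearEquiv (f : M →ₗ[S] P) {g : N →ₗ[S] P}
    (hg : Function.Injective g) {s : P →ₗ[S] M × N} (hs : f.coprod g ∘ₗ s = .id) :
    Nonempty (((LinearMap.range g).comap f × P) ≃ₗ[S] M × N) := by
  let fst : LinearMap.ker (f.coprod g) →ₗ[S] M := (LinearMap.fst S M N).domRestrict _
  have hinj : Function.Injective fst :=
    LinearMap.injective_domRestrict_iff.2 (disjoint_ker_coprod_ker_fst f hg)
  have hrange : LinearMap.range fst = (LinearMap.range g).comap f := by
    rw [LinearMap.range_domRestrict, map_fst_ker_coprod]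
  let kerEquiv := (LinearEquiv.ofInjective fst hinj).trans (LinearEquiv.ofEq _ _ hrange)
  let split := ((LinearMap.exact_subtype_ker_map (f.coprod g)).splitSurjectiveEquiv
    (Submodule.injective_subtype _) ⟨s, hs⟩).1
  exact ⟨(kerEquiv.prodCongr (LinearEquiv.refl S P)).symm.trans split.symm⟩

theorem nonempty_basis_unit_of_prod [InvariantBasisNumber S] [Module.Free S P]
    (b : Module.Basis Unit S M) (e : (P × M) ≃ₗ[S] M × M) : Nonempty (Module.Basis Unit S P) := by
  let bP := Module.Free.chooseBasis S P
  let i := ((bP.prod b).map e).indexEquiv (b.prod b)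
  let j := ((Equiv.optionEquivSumPUnit _).trans i).trans (Equiv.optionEquivSumPUnit _).symm
  exact ⟨bP.reindex (Equiv.removeNone j)⟩

theorem isPrincipal_of_free_of_prod_linearEquiv [InvariantBasisNumber S] (Q : Submodule S M)
    [Module.Free S Q] (b : Module.Basis Unit S M) (e : (Q × M) ≃ₗ[S] M × M) : Q.IsPrincipal := by
  obtain ⟨bQ⟩ := nonempty_basis_unit_of_prod b e
  refine ⟨bQ (), ?_⟩
  calc Q = (⊤ : Submodule S Q).map Q.subtype := (Submodule.map_subtype_top Q).symm
    _ = Submodule.span S {(bQ () : M)} := by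
      rw [← bQ.span_eq, Submodule.map_span, ← Set.range_comp, Set.range_unique]
      rfl

theorem invariantBasisNumber_of_ringHom {R T : Type*} [Semiring R] [Semiring T]
    [InvariantBasisNumber T] (f : R →+* T) : InvariantBasisNumber R := by
  refine invariantBasisNumber_iff_matrix.2 fun n m A B hAB hBA =>
    invariantBasisNumber_iff_matrix.1 ‹InvariantBasisNumber T› n m (A.map f) (B.map f) ?_ ?_
  · rw [← Matrix.map_mul, hAB, Matrix.map_one _ (map_zero f) (map_one f)]
  · rw [← Matrix.map_mul, hBA, Matrix.map_one _ (map_zero f) (map_one f)]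

/-- The basis `{1}` of a ring `A` as a right module over itself. -/
def rightBasis (A : Type*) [Ring A] : Module.Basis Unit Aᵐᵒᵖ A :=
  (Module.Basis.singleton Unit Aᵐᵒᵖ).map (MulOpposite.opLinearEquiv Aᵐᵒᵖ).symm

end UnimodularRow

section RightIdeal

variable {A : Type} [Ring A] {r d a b f : A}

theorem range_leftMulRight (d : A) :
    LinearMap.range (leftMulRight d) = Submodule.span Aᵐᵒᵖ {d} := by
  ext x
  rw [Submodule.mem_span_singleton]
  exact MulOpposite.opEquiv.exists_congr_left

theorem mem_comap_leftMulRight :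
    f ∈ (Submodule.span Aᵐᵒᵖ {d}).comap (leftMulRight r) ↔ ∃ v, d * v = r * f := by
  rw [← range_leftMulRight]
  rfl

theorem mem_span_pair_op {x y z : A} :
    x ∈ Submodule.span Aᵐᵒᵖ {y, z} ↔ ∃ u v, y * u + z * v = x := by
  simp only [Submodule.mem_span_pair, MulOpposite.exists, op_smul_eq_mul]

theorem comap_leftMulRight_eq_span_of_mul_add_mul_eq_one
    (hab : r * a + d * b = 1) :
    (Submodule.span Aᵐᵒᵖ {d}).comap (leftMulRight r) = Submodule.span Aᵐᵒᵖ {a * d, 1 - a * r} := by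
  have hra : r * a = 1 - d * b := eq_sub_of_add_eq hab
  ext f
  rw [mem_comap_leftMulRight, mem_span_pair_op]
  constructor
  · rintro ⟨v, hv⟩
    refine ⟨v, f, ?_⟩
    rw [mul_assoc, hv, ← mul_assoc, ← add_mul, add_sub_cancel, one_mul]
  · rintro ⟨u, v, rfl⟩
    refine ⟨u - b * d * u + b * r * v, ?_⟩
    calc d * (u - b * d * u + b * r * v) = (1 - d * b) * d * u + (1 - (1 - d * b)) * r * v := by
          noncomm_ring
      _ = r * (a * d * u + (1 - a * r) * v) := by rw [← hra]; noncomm_ring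

theorem nonempty_comap_leftMulRight_prod_linearEquiv (hab : r * a + d * b = 1)
    (hd : IsLeftRegular d) :
    Nonempty (((Submodule.span Aᵐᵒᵖ {d}).comap (leftMulRight r) × A) ≃ₗ[Aᵐᵒᵖ] A × A) := by
  rw [← range_leftMulRight]
  refine nonempty_comap_range_prod_linearEquiv (leftMulRight r) hd
    (s := (leftMulRight a).prod (leftMulRight b)) (LinearMap.ext fun x => ?_)
  change r * (a * x) + d * (b * x) = x
  rw [← mul_assoc, ← mul_assoc, ← add_mul, hab, one_mul]

theorem isStablyFreeRight_of_prod {P : Type} [AddCommGroup P] [Module Aᵐᵒᵖ P]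
    (e : (P × A) ≃ₗ[Aᵐᵒᵖ] A × A) : IsStablyFreeRight A P :=
  ⟨1, 2, ⟨((LinearEquiv.refl _ P).prodCongr (LinearEquiv.funUnique (Fin 1) _ A)).trans
    (e.trans (LinearEquiv.finTwoArrow _ A).symm)⟩⟩

end RightIdeal

/-! ### Factors of monomials in skew group rings -/

section SkewMonoidAlgebra

open SkewMonoidAlgebra

variable {R G : Type*} [Semiring R] [Group G] [MulSemiringAction G R]

theorem coeff_mul_of_uniqueMul {f g : SkewMonoidAlgebra R G} {a b : G}
    (h : UniqueMul f.support g.support a b) :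
    (f * g).coeff (a * b) = f.coeff a * a • g.coeff b := by
  classical
  rw [coeff_mul, sum_def', Finset.sum_eq_single a, sum_def', Finset.sum_eq_single b, if_pos rfl]
  · exact fun b' _ hb' => if_neg fun hab => hb' (mul_left_cancel hab)
  · intro hb
    rw [if_pos rfl, notMem_support_iff.1 hb, smul_zero, mul_zero]
  · intro a' ha hne
    rw [sum_def']
    exact Finset.sum_eq_zero fun b' hb => if_neg fun hab => hne (h ha hb hab).1
  · intro ha
    simp only [notMem_support_iff.1 ha, zero_mul, ite_self, sum_def', Finset.sum_const_zero]

theorem card_support_mul_card_support_le_one [NoZeroDivisors R] [TwoUniqueProds G]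
    {f g : SkewMonoidAlgebra R G} {c : G} {r : R} (h : f * g = single c r) :
    f.support.card * g.support.card ≤ 1 := by
  by_contra! hcard
  obtain ⟨p, hp, q, hq, hne, hup, huq⟩ := TwoUniqueProds.uniqueMul_of_one_lt_card hcard
  rw [Finset.mem_product] at hp hq
  have mul_eq_c : ∀ {a b}, a ∈ f.support → b ∈ g.support →
      UniqueMul f.support g.support a b → a * b = c := by
    intro a b ha hb hu
    by_contra hab
    have hcoeff := coeff_mul_of_uniqueMul hu
    rw [h, coeff_single, Finsupp.single_eq_of_ne hab, eq_comm, mul_eq_zero,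
      smul_eq_zero_iff_eq] at hcoeff
    exact hcoeff.elim (mem_support_iff.1 ha) (mem_support_iff.1 hb)
  have hpq := huq hp.1 hp.2 ((mul_eq_c hp.1 hp.2 hup).trans (mul_eq_c hq.1 hq.2 huq).symm)
  exact hne (Prod.ext hpq.1 hpq.2)

theorem exists_eq_single_of_card_support_le_one {R G : Type*} [Semiring R] [Nonempty G]
    {f : SkewMonoidAlgebra R G} (hf : f.support.card ≤ 1) : ∃ a x, f = single a x := by
  obtain ⟨a, x, hax⟩ := Finsupp.card_support_le_one'.1 hf
  exact ⟨a, x, coeff_injective hax⟩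

theorem exists_eq_single_of_mul_eq_single [NoZeroDivisors R] [TwoUniqueProds G]
    {f g : SkewMonoidAlgebra R G} {c : G} {r : R} (hr : r ≠ 0) (h : f * g = single c r) :
    (∃ a x, f = single a x) ∧ ∃ b y, g = single b y := by
  have hfg : f * g ≠ 0 := by rwa [h, Ne, single_eq_zero]
  have hf : 0 < f.support.card :=
    Finset.card_pos.2 <|
      Finset.nonempty_iff_ne_empty.2 (support_eq_empty.not.2 (left_ne_zero_of_mul hfg))
  have hg : 0 < g.support.card :=
    Finset.card_pos.2 <|
      Finset.nonempty_iff_ne_empty.2 (support_eq_empty.not.2 (right_ne_zero_of_mul hfg))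
  have hcard := card_support_mul_card_support_le_one h
  exact ⟨exists_eq_single_of_card_support_le_one (by nlinarith),
    exists_eq_single_of_card_support_le_one (by nlinarith)⟩

end SkewMonoidAlgebra

theorem isUnit_mulDistribMulAction_smul_iff {G S : Type*} [Group G] [Monoid S]
    [MulDistribMulAction G S] (g : G) {x : S} : IsUnit (g • x) ↔ IsUnit x :=
  MulEquiv.isUnit_map (MulDistribMulAction.toMulEquiv S g)

theorem isRegular_mulDistribMulAction_smul {G S : Type*} [Group G] [Monoid S]
    [MulDistribMulAction G S] (g : G) {x : S} (hx : IsRegular x) : IsRegular (g • x) where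
  left a b hab := smul_left_cancel g⁻¹ <| hx.left <| by
    simpa only [smul_mul', inv_smul_smul] using congrArg (g⁻¹ • ·) hab
  right a b hab := smul_left_cancel g⁻¹ <| hx.right <| by
    simpa only [smul_mul', inv_smul_smul] using congrArg (g⁻¹ • ·) hab

/-! ### Generalized Weyl algebras and skew Laurent rings -/

section GeneralizedWeyl

open SkewMonoidAlgebra Multiplicative

/-- `A` is generated by the image of `j : R → A` and elements `D`, `U` satisfying the relations of
the generalized Weyl algebra `R(σ, t)` of degree one; further relations are not excluded. The
automorphism `σ` is encoded as the action of `1 : ℤ` on `R`, so that `R` is also the coefficient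
ring of a skew Laurent ring. -/
structure IsGeneralizedWeyl {R A : Type*} [CommRing R] [MulSemiringAction (Multiplicative ℤ) R]
    [Ring A] (j : R →+* A) (t : R) (D U : A) : Prop where
  D_mul (f : R) : D * j f = j (ofAdd (1 : ℤ) • f) * D
  U_mul (f : R) : U * j (ofAdd (1 : ℤ) • f) = j f * U
  U_mul_D : U * D = j t
  D_mul_U : D * U = j (ofAdd (1 : ℤ) • t)
  closure_eq_top : Subring.closure (Set.range j ∪ {D, U}) = ⊤

/-- `φ` is the comparison map `D ↦ x`, `U ↦ t x⁻¹` from a generalized Weyl algebra to the skew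
Laurent ring `R[x^{±1}; σ]`, which is encoded as the skew group ring of `Multiplicative ℤ`. -/
structure IsLaurentMap {R A : Type*} [CommRing R] [MulSemiringAction (Multiplicative ℤ) R]
    [Ring A] (j : R →+* A) (t : R) (D U : A)
    (φ : A →+* SkewMonoidAlgebra R (Multiplicative ℤ)) : Prop where
  map_coeff (f : R) : φ (j f) = single 1 f
  map_D : φ D = single (ofAdd (1 : ℤ)) 1
  map_U : φ U = single (ofAdd (1 : ℤ))⁻¹ t

/-- The monomial `D ^ n` for `0 ≤ n` and `U ^ (-n)` for `n ≤ 0`, the standard generator of the part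
of degree `n` of a generalized Weyl algebra. -/
def weylMonomial {A : Type*} [Monoid A] (D U : A) (n : ℤ) : A := D ^ n.toNat * U ^ (-n).toNat

section

variable {A : Type*} [Monoid A] (D U : A)

theorem weylMonomial_natCast (n : ℕ) : weylMonomial D U n = D ^ n := by
  simp [weylMonomial]

theorem weylMonomial_neg_natCast (n : ℕ) : weylMonomial D U (-n) = U ^ n := by
  simp [weylMonomial]

end

/-- The combination of the elements `weylMonomial D U n` with a given finite family of
coefficients in `R`, acting on the left through `j`. -/
def weylExpansion {R A : Type*} [CommRing R] [Ring A] (j : R →+* A) (D U : A) :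
    (ℤ →₀ R) →+ A :=
  Finsupp.liftAddHom fun n => (AddMonoidHom.mulRight (weylMonomial D U n)).comp j

theorem weylExpansion_single {R A : Type*} [CommRing R] [Ring A] (j : R →+* A) (D U : A)
    (n : ℤ) (f : R) : weylExpansion j D U (Finsupp.single n f) = j f * weylMonomial D U n := by
  simp [weylExpansion]

variable {R A : Type*} [CommRing R] [MulSemiringAction (Multiplicative ℤ) R] [Ring A]
  {j : R →+* A} {t : R} {D U : A}

namespace IsGeneralizedWeyl

variable (hA : IsGeneralizedWeyl j t D U)
include hA

theorem exists_D_mul_weylMonomial (n : ℤ) :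
    ∃ c, D * weylMonomial D U n = j c * weylMonomial D U (n + 1) := by
  obtain ⟨k, rfl | rfl⟩ := n.eq_nat_or_neg
  · refine ⟨1, ?_⟩
    rw [← Nat.cast_succ, weylMonomial_natCast, weylMonomial_natCast, map_one, one_mul, pow_succ']
  · cases k with
    | zero => exact ⟨1, by simp [weylMonomial]⟩
    | succ k =>
      refine ⟨ofAdd (1 : ℤ) • t, ?_⟩
      have hk : -((k + 1 : ℕ) : ℤ) + 1 = -k := by push_cast; ring
      rw [hk, weylMonomial_neg_natCast, weylMonomial_neg_natCast, pow_succ', ← mul_assoc,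
        hA.D_mul_U]

theorem exists_U_mul_weylMonomial (n : ℤ) :
    ∃ c, U * weylMonomial D U n = j c * weylMonomial D U (n - 1) := by
  obtain ⟨k, rfl | rfl⟩ := n.eq_nat_or_neg
  · cases k with
    | zero => exact ⟨1, by simp [weylMonomial]⟩
    | succ k =>
      refine ⟨t, ?_⟩
      rw [Nat.cast_succ, add_sub_cancel_right, ← Nat.cast_succ, weylMonomial_natCast,
        weylMonomial_natCast, pow_succ', ← mul_assoc, hA.U_mul_D]
  · refine ⟨1, ?_⟩
    rw [← neg_add', ← Nat.cast_succ, weylMonomial_neg_natCast, weylMonomial_neg_natCast, map_one,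
      one_mul, pow_succ']

theorem mul_mem_range_weylExpansion {a x : A}
    (ha : a ∈ Set.range j ∪ {D, U}) (hx : x ∈ (weylExpansion j D U).range) :
    a * x ∈ (weylExpansion j D U).range := by
  obtain ⟨v, rfl⟩ := hx
  have hmem (f : R) (n : ℤ) : j f * weylMonomial D U n ∈ (weylExpansion j D U).range :=
    ⟨_, weylExpansion_single j D U n f⟩
  induction v using Finsupp.induction_linear with
  | zero => rw [map_zero, mul_zero]; exact zero_mem _
  | add v w hv hw => rw [map_add, mul_add]; exact add_mem hv hw
  | single n f =>
    rw [weylExpansion_single, ← mul_assoc]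
    rcases ha with ⟨g, rfl⟩ | rfl | rfl
    · rw [← map_mul]
      exact hmem _ _
    · obtain ⟨c, hc⟩ := hA.exists_D_mul_weylMonomial n
      rw [hA.D_mul, mul_assoc, hc, ← mul_assoc, ← map_mul]
      exact hmem _ _
    · obtain ⟨c, hc⟩ := hA.exists_U_mul_weylMonomial n
      rw [← smul_inv_smul (ofAdd (1 : ℤ)) f, hA.U_mul, mul_assoc, hc, ← mul_assoc, ← map_mul]
      exact hmem _ _

theorem weylExpansion_surjective : Function.Surjective (weylExpansion j D U) := by
  intro a
  have ha : a ∈ Subring.closure (Set.range j ∪ {D, U}) := by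
    rw [hA.closure_eq_top]; exact Subring.mem_top a
  suffices H : ∀ x ∈ (weylExpansion j D U).range, a * x ∈ (weylExpansion j D U).range by
    rw [← AddMonoidHom.mem_range, ← mul_one a]
    exact H 1 ⟨Finsupp.single 0 1, by simp [weylExpansion_single, weylMonomial]⟩
  induction ha using Subring.closure_induction with
  | mem a ha => exact fun x => hA.mul_mem_range_weylExpansion ha
  | zero => exact fun x _ => by rw [zero_mul]; exact zero_mem _
  | one => exact fun x hx => by rwa [one_mul]
  | add a b _ _ ha hb => exact fun x hx => by rw [add_mul]; exact add_mem (ha x hx) (hb x hx)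
  | neg a _ ha => exact fun x hx => by rw [neg_mul]; exact neg_mem (ha x hx)
  | mul a b _ _ ha hb => exact fun x hx => by rw [mul_assoc]; exact ha _ (hb x hx)

end IsGeneralizedWeyl

variable {φ : A →+* SkewMonoidAlgebra R (Multiplicative ℤ)}

namespace IsLaurentMap

variable (hφ : IsLaurentMap j t D U φ)
include hφ

theorem map_D_pow (n : ℕ) : φ (D ^ n) = single (ofAdd (n : ℤ)) 1 := by
  rw [map_pow, hφ.map_D]
  induction n with
  | zero => rfl
  | succ n ih =>
    rw [pow_succ, ih, single_mul_single, smul_one, mul_one, ← ofAdd_add, Nat.cast_succ]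

theorem exists_map_weylMonomial (n : ℤ) :
    ∃ c, φ (weylMonomial D U n) = single (ofAdd n) c ∧ (n < 0 → t ∣ c) ∧
      (IsRegular t → IsRegular c) := by
  obtain ⟨k, rfl | rfl⟩ := n.eq_nat_or_neg
  · exact ⟨1, by rw [weylMonomial_natCast, hφ.map_D_pow], fun h => by omega,
      fun _ => isRegular_one⟩
  · rw [weylMonomial_neg_natCast]
    induction k with
    | zero =>
      exact ⟨1, by rw [pow_zero, map_one]; rfl, fun h => by simp at h, fun _ => isRegular_one⟩
    | succ k ih =>
      obtain ⟨c, hU, -, hc⟩ := ih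
      refine ⟨t * (ofAdd (1 : ℤ))⁻¹ • c, ?_, fun _ => dvd_mul_right _ _,
        fun ht => ht.mul (isRegular_mulDistribMulAction_smul _ (hc ht))⟩
      rw [pow_succ', map_mul, hφ.map_U, hU, single_mul_single, ← ofAdd_neg, ← ofAdd_add,
        Nat.cast_succ, neg_add_rev]

theorem coeff_map_weylExpansion {c : ℤ → R}
    (hc : ∀ n, φ (weylMonomial D U n) = single (ofAdd n) (c n)) (v : ℤ →₀ R) (n : ℤ) :
    (φ (weylExpansion j D U v)).coeff (ofAdd n) = v n * c n := by
  classical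
  induction v using Finsupp.induction_linear with
  | zero => simp only [map_zero, coeff_zero, Finsupp.coe_zero, Pi.zero_apply, zero_mul]
  | add v w hv hw =>
    rw [map_add, map_add, coeff_add, Finsupp.add_apply, hv, hw, Finsupp.add_apply, add_mul]
  | single m f =>
    rw [weylExpansion_single, map_mul, hφ.map_coeff, hc, single_mul_single, one_mul, one_smul,
      coeff_single, Finsupp.single_apply, Finsupp.single_apply, ite_mul, zero_mul]
    simp only [EmbeddingLike.apply_eq_iff_eq]
    split_ifs with hmn
    · rw [hmn]
    · rfl

variable (hA : IsGeneralizedWeyl j t D U)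
include hA

theorem injective (ht : IsRegular t) : Function.Injective φ := by
  choose c hc _ hreg using hφ.exists_map_weylMonomial
  rw [injective_iff_map_eq_zero]
  intro a ha
  obtain ⟨v, rfl⟩ := hA.weylExpansion_surjective a
  suffices hv : v = 0 by rw [hv, map_zero]
  ext n
  have hn := hφ.coeff_map_weylExpansion hc v n
  rw [ha, coeff_zero, Finsupp.zero_apply] at hn
  exact (hreg n ht).right (by simpa using hn.symm)

theorem dvd_coeff_map_of_neg (a : A) {n : ℤ} (hn : n < 0) : t ∣ (φ a).coeff (ofAdd n) := by
  choose c hc hdvd _ using hφ.exists_map_weylMonomial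
  obtain ⟨v, rfl⟩ := hA.weylExpansion_surjective a
  rw [hφ.coeff_map_weylExpansion hc]
  exact (hdvd n hn).mul_left _

theorem smul_dvd_coeff_map_mul {x : A} {m n : ℤ} {f : R}
    (hx : φ x = single (ofAdd m) f) (hnm : n < m) (y : A) :
    ofAdd m • t ∣ (φ (x * y)).coeff (ofAdd n) := by
  have hdvd : t ∣ (φ y).coeff (ofAdd (n - m)) := hφ.dvd_coeff_map_of_neg hA y (sub_neg.2 hnm)
  rw [map_mul, hx, coeff_single_mul, ← ofAdd_neg, ← ofAdd_add, neg_add_eq_sub]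
  exact (map_dvd (MulSemiringAction.toRingHom _ R (ofAdd m)) hdvd).mul_left f

theorem isLeftRegular_D (ht : IsRegular t) : IsLeftRegular D := by
  have hinv : single (ofAdd (1 : ℤ))⁻¹ 1 * φ D = 1 := by
    rw [hφ.map_D, single_mul_single, smul_one, mul_one, inv_mul_cancel, one_def]
  refine fun x y hxy => hφ.injective hA ht (isLeftRegular_of_mul_eq_one hinv ?_)
  simpa only [map_mul] using congrArg φ hxy

theorem nonneg_of_map_eq_single (htu : ¬IsUnit t) {a : A} {n : ℤ} {f : R} (hf : IsUnit f)
    (ha : φ a = single (ofAdd n) f) : 0 ≤ n := by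
  by_contra! hn
  have hdvd := hφ.dvd_coeff_map_of_neg hA a hn
  rw [ha, coeff_single, Finsupp.single_eq_same] at hdvd
  exact htu (isUnit_of_dvd_unit hdvd hf)

theorem exists_map_eq_single_of_mul_eq_D_pow [IsDomain R] (htu : ¬IsUnit t)
    {x y : A} {N : ℕ} (hxy : x * y = D ^ N) :
    ∃ (m : ℤ) (f : R), 0 ≤ m ∧ m ≤ N ∧ IsUnit f ∧ φ x = single (ofAdd m) f := by
  have hφxy : φ x * φ y = single (ofAdd (N : ℤ)) 1 := by rw [← map_mul, hxy, hφ.map_D_pow]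
  obtain ⟨⟨a, f, hx⟩, b, g, hy⟩ := exists_eq_single_of_mul_eq_single one_ne_zero hφxy
  obtain ⟨m, rfl⟩ := ofAdd.surjective a
  obtain ⟨k, rfl⟩ := ofAdd.surjective b
  rw [hx, hy, single_mul_single, ← ofAdd_add] at hφxy
  obtain ⟨hmk, hfg⟩ : m + k = N ∧ f * ofAdd m • g = 1 := by
    have hcoeff := congrArg coeff hφxy
    rw [coeff_single, coeff_single, Finsupp.single_eq_single_iff] at hcoeff
    exact (hcoeff.resolve_right fun h => one_ne_zero h.2).imp_left ofAdd.injective.eq_iff.1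
  have hf : IsUnit f := .of_mul_eq_one _ hfg
  have hg : IsUnit g := (isUnit_mulDistribMulAction_smul_iff _).1 (.of_mul_eq_one_right _ hfg)
  have hm := hφ.nonneg_of_map_eq_single hA htu hf hx
  have hk := hφ.nonneg_of_map_eq_single hA htu hg hy
  exact ⟨m, f, hm, by omega, hf, hx⟩

end IsLaurentMap

end GeneralizedWeyl

/-! ### Down-up algebras as generalized Weyl algebras -/

theorem semiconjBy_mvPolynomial {ι K A : Type*} [CommSemiring K] [Semiring A] [Algebra K A] {d : A}
    {j₁ j₂ : MvPolynomial ι K →ₐ[K] A}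
    (h : ∀ i, SemiconjBy d (j₁ (.X i)) (j₂ (.X i))) (f : MvPolynomial ι K) :
    SemiconjBy d (j₁ f) (j₂ f) := by
  induction f using MvPolynomial.induction_on with
  | C c =>
    rw [← MvPolynomial.algebraMap_eq, AlgHom.commutes, AlgHom.commutes]
    exact (Algebra.commutes c d).symm
  | add p q hp hq => rw [map_add, map_add]; exact hp.add_right hq
  | mul_X p i hp => rw [map_mul, map_mul]; exact hp.mul_right (h i)

open Algebra in
open scoped IsMulCommutative in
theorem exists_mvPolynomial_algHom_X_eq {ι K A : Type*} [CommRing K] [Ring A] [Algebra K A]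
    {a : ι → A} (ha : ∀ i k, a i * a k = a k * a i) :
    ∃ j : MvPolynomial ι K →ₐ[K] A, ∀ i, j (.X i) = a i := by
  have hcomm : ∀ x ∈ Set.range a, ∀ y ∈ Set.range a, x * y = y * x := by
    rintro _ ⟨i, rfl⟩ _ ⟨k, rfl⟩
    exact ha i k
  have := isMulCommutative_adjoin K hcomm
  exact ⟨(adjoin K (Set.range a)).val.comp
      (MvPolynomial.aeval fun i => ⟨a i, subset_adjoin ⟨i, rfl⟩⟩),
    fun i => by rw [AlgHom.comp_apply, MvPolynomial.aeval_X]; rfl⟩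

/-- The polynomial ring `K[t, w]`. The scalars `l` and `μ` are recorded in the type because they
determine the automorphism through which `ℤ` acts on it. -/
def CoeffRing {K : Type*} [Field K] (_l _μ : K) : Type _ := MvPolynomial (Fin 2) K

namespace CoeffRing

variable {K : Type*} [Field K] {l μ : K}

instance : CommRing (CoeffRing l μ) := inferInstanceAs (CommRing (MvPolynomial (Fin 2) K))
instance : IsDomain (CoeffRing l μ) := inferInstanceAs (IsDomain (MvPolynomial (Fin 2) K))
instance : Algebra K (CoeffRing l μ) := inferInstanceAs (Algebra K (MvPolynomial (Fin 2) K))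

/-- The variable that is mapped to `U * D` in a down-up algebra. -/
def t : CoeffRing l μ := MvPolynomial.X 0

/-- The variable that is mapped to `ω = D * U - l • (U * D)` in a down-up algebra. -/
def w : CoeffRing l μ := MvPolynomial.X 1

/-- The evaluation homomorphism `t ↦ a`, `w ↦ b`. -/
def lift {B : Type*} [CommSemiring B] [Algebra K B] (a b : B) : CoeffRing l μ →ₐ[K] B :=
  MvPolynomial.aeval ![a, b]

section

variable {B : Type*} [CommSemiring B] [Algebra K B] (a b : B)

@[simp] theorem lift_t : lift a b (t : CoeffRing l μ) = a := MvPolynomial.aeval_X _ _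

@[simp] theorem lift_w : lift a b (w : CoeffRing l μ) = b := MvPolynomial.aeval_X _ _

end

theorem algHom_ext {B : Type*} [Semiring B] [Algebra K B] {f g : CoeffRing l μ →ₐ[K] B}
    (ht : f t = g t) (hw : f w = g w) : f = g :=
  MvPolynomial.algHom_ext (Fin.forall_fin_two.2 ⟨ht, hw⟩)

theorem semiconjBy {A : Type*} [Semiring A] [Algebra K A] {d : A} {j₁ j₂ : CoeffRing l μ →ₐ[K] A}
    (ht : SemiconjBy d (j₁ t) (j₂ t)) (hw : SemiconjBy d (j₁ w) (j₂ w)) (f : CoeffRing l μ) :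
    SemiconjBy d (j₁ f) (j₂ f) :=
  semiconjBy_mvPolynomial (Fin.forall_fin_two.2 ⟨ht, hw⟩) f

theorem isRegular_t : IsRegular (t : CoeffRing l μ) :=
  IsRegular.of_ne_zero (MvPolynomial.X_ne_zero 0)

theorem not_isUnit_t : ¬IsUnit (t : CoeffRing l μ) := fun ht => by
  have h0 := ht.map (lift (0 : K) 0)
  rw [lift_t] at h0
  exact not_isUnit_zero h0

/-- The automorphism `t ↦ l t + w`, `w ↦ μ w`, through which `D` commutes past `K[t, w]`; the image
of `t` stands for `D * U`. -/
def shift [NeZero l] [NeZero μ] : CoeffRing l μ ≃ₐ[K] CoeffRing l μ :=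
  AlgEquiv.ofAlgHom (lift (l • t + w) (μ • w)) (lift (l⁻¹ • t - (l⁻¹ * μ⁻¹) • w) (μ⁻¹ • w))
    (algHom_ext (by simp [smul_smul, NeZero.ne]) (by simp [smul_smul, NeZero.ne]))
    (algHom_ext (by simp [smul_smul, smul_sub, NeZero.ne]) (by simp [smul_smul, NeZero.ne]))

variable [NeZero l] [NeZero μ]

instance : MulSemiringAction (Multiplicative ℤ) (CoeffRing l μ) :=
  MulSemiringAction.compHom _ (zpowersHom (CoeffRing l μ ≃ₐ[K] CoeffRing l μ) shift)

theorem smul_def (g : Multiplicative ℤ) (f : CoeffRing l μ) :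
    g • f = (shift ^ g.toAdd : CoeffRing l μ ≃ₐ[K] CoeffRing l μ) f := rfl

theorem ofAdd_one_smul (f : CoeffRing l μ) : Multiplicative.ofAdd (1 : ℤ) • f = shift f := by
  rw [smul_def, toAdd_ofAdd, zpow_one]

instance : SMulCommClass (Multiplicative ℤ) K (CoeffRing l μ) where
  smul_comm g c f := by rw [smul_def, smul_def, map_smul]

theorem ofAdd_one_smul_t : Multiplicative.ofAdd (1 : ℤ) • (t : CoeffRing l μ) = l • t + w := by
  rw [ofAdd_one_smul]
  exact lift_t _ _

theorem ofAdd_one_smul_w : Multiplicative.ofAdd (1 : ℤ) • (w : CoeffRing l μ) = μ • w := by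
  rw [ofAdd_one_smul]
  exact lift_w _ _

theorem smul_smul_t :
    Multiplicative.ofAdd (1 : ℤ) • Multiplicative.ofAdd (1 : ℤ) • (t : CoeffRing l μ) =
      (l + μ) • Multiplicative.ofAdd (1 : ℤ) • t + -(l * μ) • t := by
  rw [ofAdd_one_smul_t, smul_add, smul_comm _ l, ofAdd_one_smul_t, ofAdd_one_smul_w]
  module

theorem not_smul_t_dvd_smul_w_mul_w {c : K} (hc : c ≠ 0) :
    ¬Multiplicative.ofAdd (1 : ℤ) • (t : CoeffRing l μ) ∣ c • (w * w) := fun hdvd => by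
  have hl : l ≠ 0 := NeZero.ne l
  have heval := map_dvd (lift 1 (-l)) hdvd
  rw [ofAdd_one_smul_t] at heval
  simp only [map_add, map_smul, map_mul, lift_t, lift_w] at heval
  simp [hc, hl] at heval

end CoeffRing

/-- The relations that `D`, `U` and `w = ω = DU - λUD` satisfy in a down-up algebra with `γ = 0`,
where `l = λ` and `μ` are the roots of `t² - αt - β`. They let every word be rewritten with `U` on
the left and `D` on the right. -/
structure IsDownUpTriple {K A : Type*} [CommRing K] [Ring A] [Algebra K A] (l μ : K) (D U w : A) :
    Prop where
  D_mul_U : D * U = l • (U * D) + w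
  w_mul_U : w * U = μ • (U * w)
  D_mul_w : D * w = μ • (w * D)

namespace IsDownUpTriple

section

variable {K A : Type*} [CommRing K] [Ring A] [Algebra K A] {l μ : K} {D U w : A}
  (h : IsDownUpTriple l μ D U w)
include h

theorem D_mul_U_mul (x : A) : D * (U * x) = l • (U * (D * x)) + w * x := by
  rw [← mul_assoc, h.D_mul_U, add_mul, smul_mul_assoc, mul_assoc]

theorem w_mul_U_mul (x : A) : w * (U * x) = μ • (U * (w * x)) := by
  rw [← mul_assoc, h.w_mul_U, smul_mul_assoc, mul_assoc]

theorem D_mul_w_mul (x : A) : D * (w * x) = μ • (w * (D * x)) := by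
  rw [← mul_assoc, h.D_mul_w, smul_mul_assoc, mul_assoc]

end

section

open CoeffRing Multiplicative

variable {K A : Type*} [Field K] [Ring A] [Algebra K A] {l μ : K} {D U w : A}

theorem exists_coeffHom (h : IsDownUpTriple l μ D U w) :
    ∃ j : CoeffRing l μ →ₐ[K] A, j CoeffRing.t = U * D ∧ j CoeffRing.w = w := by
  have hcomm : w * (U * D) = U * D * w := by
    rw [h.w_mul_U_mul, mul_assoc, h.D_mul_w, mul_smul_comm]
  obtain ⟨j, hj⟩ := exists_mvPolynomial_algHom_X_eq (K := K) (a := ![U * D, w])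
    (Fin.forall_fin_two.2 ⟨Fin.forall_fin_two.2 ⟨rfl, hcomm.symm⟩,
      Fin.forall_fin_two.2 ⟨hcomm, rfl⟩⟩)
  exact ⟨j, hj 0, hj 1⟩

variable [NeZero l] [NeZero μ] {j : CoeffRing l μ →ₐ[K] A}

theorem isGeneralizedWeyl (h : IsDownUpTriple l μ D U w) (hjt : j CoeffRing.t = U * D)
    (hjw : j CoeffRing.w = w) (hgen : Algebra.adjoin K {D, U} = ⊤) :
    IsGeneralizedWeyl (j : CoeffRing l μ →+* A) CoeffRing.t D U := by
  have hjst : j (ofAdd (1 : ℤ) • CoeffRing.t) = D * U := by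
    rw [ofAdd_one_smul_t, map_add, map_smul, hjt, hjw, h.D_mul_U]
  have hjsw : j (ofAdd (1 : ℤ) • CoeffRing.w) = μ • w := by
    rw [ofAdd_one_smul_w, map_smul, hjw]
  let js : CoeffRing l μ →ₐ[K] A := j.comp (shift : CoeffRing l μ ≃ₐ[K] CoeffRing l μ).toAlgHom
  have hjs (f : CoeffRing l μ) : js f = j (ofAdd (1 : ℤ) • f) := by
    rw [ofAdd_one_smul]; rfl
  refine ⟨fun f => ?_, fun f => ?_, hjt.symm, hjst.symm, ?_⟩
  · refine (CoeffRing.semiconjBy (j₁ := j) (j₂ := js) ?_ ?_ f).eq.trans (by rw [hjs]; rfl)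
    · rw [hjt, hjs, hjst, SemiconjBy, mul_assoc]
    · rw [hjw, hjs, hjsw, SemiconjBy, h.D_mul_w, smul_mul_assoc]
  · refine Eq.trans (by rw [hjs]; rfl) (CoeffRing.semiconjBy (j₁ := js) (j₂ := j) ?_ ?_ f).eq
    · rw [hjt, hjs, hjst, SemiconjBy, mul_assoc]
    · rw [hjw, hjs, hjsw, SemiconjBy, h.w_mul_U, mul_smul_comm]
  · rw [eq_top_iff, ← Algebra.top_toSubring (R := K), ← hgen, Algebra.adjoin_eq_ring_closure]
    refine Subring.closure_mono (Set.union_subset_union_left _ ?_)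
    rintro _ ⟨c, rfl⟩
    exact ⟨algebraMap K _ c, j.commutes c⟩

end

/-! ### Generators of the right ideal -/

section Identities

variable {K A : Type*} [Field K] [Ring A] [Algebra K A] {l μ : K} {D U w : A}

/-- The generator `DUω + λ⁻¹μω² + μ²D` of `K'`, for `λ = l` and `ω = w`. -/
def secondGenerator (l μ : K) (D U w : A) : A :=
  D * U * w + (l⁻¹ * μ) • (w * w) + (μ ^ 2) • D

/-- The first entry `a` of a column `(a, b)` with `(1 + Uω)a + Db = 1`, for `λ = l` and `ω = w`. -/
def columnEntry (l μ : K) (D U w : A) : A := 1 - U * w - (l * μ⁻¹ ^ 2) • (D * U * U)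

theorem row_mul_column (h : IsDownUpTriple l μ D U w) (hμ : μ ≠ 0) :
    (1 + U * w) * columnEntry l μ D U w +
      D * (μ⁻¹ ^ 3 • ((1 + U * w) * U * U) - (μ⁻¹ ^ 3 * (1 - l * μ)) • (U * U)) = 1 := by
  simp only [columnEntry, mul_add, add_mul, mul_sub, sub_mul, one_mul, mul_one, mul_assoc,
    h.D_mul_U, h.D_mul_w, h.w_mul_U, h.D_mul_U_mul, h.w_mul_U_mul, smul_mul_assoc,
    mul_smul_comm, smul_add, smul_smul]
  match_scalars <;> field_simp <;> ring

theorem columnEntry_mul_D (h : IsDownUpTriple l μ D U w) (hl : l ≠ 0) (hμ : μ ≠ 0) :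
    columnEntry l μ D U w * D =
      D * D * (-(l⁻¹ * μ⁻¹ ^ 2) • (U * U)) + secondGenerator l μ D U w * (μ⁻¹ ^ 2 • 1) := by
  simp only [columnEntry, secondGenerator, add_mul, sub_mul, one_mul, mul_one, mul_assoc,
    mul_add, h.D_mul_U, h.D_mul_w, h.w_mul_U, h.D_mul_U_mul, h.w_mul_U_mul, smul_mul_assoc,
    mul_smul_comm, smul_add, smul_smul]
  match_scalars <;> field_simp <;> ring

theorem one_sub_columnEntry_mul_row (h : IsDownUpTriple l μ D U w) (hl : l ≠ 0) (hμ : μ ≠ 0) :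
    1 - columnEntry l μ D U w * (1 + U * w) =
      secondGenerator l μ D U w * ((l * μ⁻¹ ^ 4) • (U * U)) := by
  simp only [columnEntry, secondGenerator, add_mul, sub_mul, one_mul, mul_one, mul_assoc,
    mul_add, h.D_mul_U, h.D_mul_w, h.w_mul_U, h.D_mul_U_mul, h.w_mul_U_mul, smul_mul_assoc,
    mul_smul_comm, smul_add, smul_smul]
  match_scalars <;> field_simp <;> ring

theorem row_mul_D_mul_D (h : IsDownUpTriple l μ D U w) (hl : l ≠ 0) (hμ : μ ≠ 0) :
    (1 + U * w) * (D * D) =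
      D * (D + (μ⁻¹ ^ 2 * l⁻¹ ^ 2) • (D * U * w) - (μ⁻¹ ^ 3 * l⁻¹ ^ 2 * (l + μ)) • (w * w)) := by
  simp only [mul_add, add_mul, mul_sub, one_mul, mul_assoc, h.D_mul_U, h.D_mul_w,
    h.D_mul_U_mul, h.D_mul_w_mul, smul_mul_assoc, mul_smul_comm, smul_add, smul_smul]
  match_scalars <;> field_simp
  ring

theorem row_mul_secondGenerator (h : IsDownUpTriple l μ D U w) (hl : l ≠ 0) (hμ : μ ≠ 0) :
    (1 + U * w) * secondGenerator l μ D U w =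
      D * (U * w + μ ^ 2 • 1 + (l⁻¹ * μ) • (U * w) + (l⁻¹ * μ⁻¹) • (U * w * U * w)) := by
  simp only [secondGenerator, mul_add, add_mul, one_mul, mul_one, mul_assoc, h.D_mul_U,
    h.D_mul_w, h.w_mul_U, h.D_mul_U_mul, h.D_mul_w_mul, h.w_mul_U_mul, smul_mul_assoc,
    mul_smul_comm, smul_add, smul_smul]
  match_scalars <;> field_simp

end Identities

theorem comap_leftMulRight_eq_span {K : Type*} {A : Type} [Field K] [Ring A] [Algebra K A]
    {l μ : K} {D U w : A} (h : IsDownUpTriple l μ D U w) (hl : l ≠ 0) (hμ : μ ≠ 0) :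
    (Submodule.span Aᵐᵒᵖ {D}).comap (leftMulRight (1 + U * w)) =
      Submodule.span Aᵐᵒᵖ {D * D, secondGenerator l μ D U w} := by
  apply le_antisymm
  · rw [comap_leftMulRight_eq_span_of_mul_add_mul_eq_one (h.row_mul_column hμ), Submodule.span_le]
    rintro x (rfl | rfl)
    · exact mem_span_pair_op.2 ⟨_, _, (h.columnEntry_mul_D hl hμ).symm⟩
    · exact mem_span_pair_op.2 ⟨0, _, by
        rw [mul_zero, zero_add, h.one_sub_columnEntry_mul_row hl hμ]⟩
  · rw [Submodule.span_le]
    rintro x (rfl | rfl)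
    · exact mem_comap_leftMulRight.2 ⟨_, (h.row_mul_D_mul_D hl hμ).symm⟩
    · exact mem_comap_leftMulRight.2 ⟨_, (h.row_mul_secondGenerator hl hμ).symm⟩

section Laurent

open CoeffRing Multiplicative SkewMonoidAlgebra

variable {K A : Type*} [Field K] [Ring A] [Algebra K A] {l μ : K} {D U w : A}
  [NeZero l] [NeZero μ] {j : CoeffRing l μ →ₐ[K] A}
  {φ : A →ₐ[K] SkewMonoidAlgebra (CoeffRing l μ) (Multiplicative ℤ)}

theorem isLaurentMap (h : IsDownUpTriple l μ D U w) (hjt : j CoeffRing.t = U * D)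
    (hjw : j CoeffRing.w = w) (hD : φ D = single (ofAdd (1 : ℤ)) 1)
    (hU : φ U = single (ofAdd (1 : ℤ))⁻¹ CoeffRing.t) :
    IsLaurentMap (j : CoeffRing l μ →+* A) CoeffRing.t D U
      (φ : A →+* SkewMonoidAlgebra (CoeffRing l μ) (Multiplicative ℤ)) := by
  let const : CoeffRing l μ →ₐ[K] SkewMonoidAlgebra (CoeffRing l μ) (Multiplicative ℤ) :=
    { singleOneRingHom with commutes' := fun _ => rfl }
  have ht : φ (j CoeffRing.t) = const CoeffRing.t := by
    rw [hjt, map_mul, hU, hD, single_mul_single, inv_mul_cancel, smul_one, mul_one]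
    rfl
  have hw : φ (j CoeffRing.w) = const CoeffRing.w := by
    have hw_eq : w = D * U - l • (U * D) := by rw [h.D_mul_U, add_sub_cancel_left]
    rw [hjw, hw_eq, map_sub, map_smul, ← hjt, ht, map_mul, hD, hU, single_mul_single,
      mul_inv_cancel, one_mul, ofAdd_one_smul_t]
    change const _ - l • const _ = _
    rw [← map_smul, ← map_sub, add_sub_cancel_left]
  exact ⟨AlgHom.congr_fun (algHom_ext (f := φ.comp j) ht hw), hD, hU⟩

theorem map_secondGenerator (hD : φ D = single (ofAdd (1 : ℤ)) 1)
    (hU : φ U = single (ofAdd (1 : ℤ))⁻¹ CoeffRing.t) (hw : φ w = single 1 CoeffRing.w) :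
    φ (secondGenerator l μ D U w) =
      single (ofAdd 0) ((ofAdd (1 : ℤ) • CoeffRing.t) * CoeffRing.w +
        (l⁻¹ * μ) • (CoeffRing.w * CoeffRing.w)) +
      single (ofAdd 1) (μ ^ 2 • 1) := by
  rw [secondGenerator, map_add, map_add, map_smul, map_smul, map_mul, map_mul, map_mul, hD, hU, hw,
    single_mul_single, single_mul_single, single_mul_single, mul_inv_cancel, one_mul, one_mul,
    one_smul, smul_single, smul_single, ofAdd_zero, single_add]

end Laurent

/-! ### Non-principality -/

section NotPrincipal

open CoeffRing Multiplicative SkewMonoidAlgebra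

variable {K A : Type*} [Field K] [Ring A] [Algebra K A] {l μ : K} {D U w : A}
  [NeZero l] [NeZero μ] {j : CoeffRing l μ →+* A}
  {φ : A →ₐ[K] SkewMonoidAlgebra (CoeffRing l μ) (Multiplicative ℤ)} {f v : A} {c : CoeffRing l μ}
  (hA : IsGeneralizedWeyl j CoeffRing.t D U)
  (hφ : IsLaurentMap j CoeffRing.t D U
    (φ : A →+* SkewMonoidAlgebra (CoeffRing l μ) (Multiplicative ℤ)))
  (hw : φ w = single 1 CoeffRing.w)
include hA hφ hw

theorem not_isUnit_of_map_eq_single_zero (hf : φ f = single (ofAdd 0) c)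
    (hfv : D * v = (1 + U * w) * f) : ¬IsUnit c := by
  intro hc
  have hdvd : ofAdd (1 : ℤ) • CoeffRing.t ∣ (φ (D * v)).coeff (ofAdd 0) :=
    hφ.smul_dvd_coeff_map_mul hA hφ.map_D zero_lt_one v
  have hU : φ U = single (ofAdd (1 : ℤ))⁻¹ CoeffRing.t := hφ.map_U
  have hcoeff : (φ (D * v)).coeff (ofAdd 0) = c := by
    rw [hfv, add_mul, one_mul, map_add, map_mul, map_mul, hU, hw, hf, single_mul_single,
      single_mul_single, coeff_add, Finsupp.add_apply, coeff_single, coeff_single,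
      Finsupp.single_eq_same, Finsupp.single_eq_of_ne (by decide), add_zero]
  rw [hcoeff] at hdvd
  exact not_isUnit_t ((isUnit_mulDistribMulAction_smul_iff _).1 (isUnit_of_dvd_unit hdvd hc))

theorem secondGenerator_ne_mul_of_map_eq_single_one (hf : φ f = single (ofAdd 1) c) (y : A) :
    f * y ≠ secondGenerator l μ D U w := by
  intro hfy
  have hdvd : ofAdd (1 : ℤ) • CoeffRing.t ∣ (φ (f * y)).coeff (ofAdd 0) :=
    hφ.smul_dvd_coeff_map_mul hA hf zero_lt_one y
  rw [hfy, map_secondGenerator hφ.map_D hφ.map_U hw, coeff_add, Finsupp.add_apply, coeff_single,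
    coeff_single, Finsupp.single_eq_same, Finsupp.single_eq_of_ne (by decide), add_zero,
    dvd_add_right (dvd_mul_right _ _)] at hdvd
  exact not_smul_t_dvd_smul_w_mul_w (mul_ne_zero (inv_ne_zero (NeZero.ne l)) (NeZero.ne μ)) hdvd

theorem secondGenerator_ne_mul_of_map_eq_single_two (hf : φ f = single (ofAdd 2) c) (y : A) :
    f * y ≠ secondGenerator l μ D U w := by
  intro hfy
  have hdvd : ofAdd (2 : ℤ) • CoeffRing.t ∣ (φ (f * y)).coeff (ofAdd 1) :=
    hφ.smul_dvd_coeff_map_mul hA hf one_lt_two y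
  rw [hfy, map_secondGenerator hφ.map_D hφ.map_U hw, coeff_add, Finsupp.add_apply, coeff_single,
    coeff_single, Finsupp.single_eq_same, Finsupp.single_eq_of_ne (by decide), zero_add] at hdvd
  have hunit : IsUnit (μ ^ 2 • (1 : CoeffRing l μ)) :=
    isUnit_one.smul (Units.mk0 _ (pow_ne_zero 2 (NeZero.ne μ)))
  exact not_isUnit_t ((isUnit_mulDistribMulAction_smul_iff _).1 (isUnit_of_dvd_unit hdvd hunit))

theorem not_exists_common_left_factor (hfv : D * v = (1 + U * w) * f) :
    ¬((∃ x, f * x = D * D) ∧ ∃ y, f * y = secondGenerator l μ D U w) := by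
  rintro ⟨⟨x, hx⟩, y, hy⟩
  obtain ⟨m, c, hm0, hm2, hc, hfc⟩ :=
    hφ.exists_map_eq_single_of_mul_eq_D_pow hA not_isUnit_t (hx.trans (sq D).symm)
  have hm : m = 0 ∨ m = 1 ∨ m = 2 := by omega
  rcases hm with rfl | rfl | rfl
  · exact not_isUnit_of_map_eq_single_zero hA hφ hw hfc hfv hc
  · exact secondGenerator_ne_mul_of_map_eq_single_one hA hφ hw hfc y hy
  · exact secondGenerator_ne_mul_of_map_eq_single_two hA hφ hw hfc y hy

end NotPrincipal

section RightIdeal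

open Multiplicative SkewMonoidAlgebra

variable {K : Type*} {A : Type} [Field K] [Ring A] [Algebra K A] {l μ : K} {D U w : A}
  [NeZero l] [NeZero μ] {φ : A →ₐ[K] SkewMonoidAlgebra (CoeffRing l μ) (Multiplicative ℤ)}
  (h : IsDownUpTriple l μ D U w) (hgen : Algebra.adjoin K {D, U} = ⊤)
  (hD : φ D = single (ofAdd (1 : ℤ)) 1) (hU : φ U = single (ofAdd (1 : ℤ))⁻¹ CoeffRing.t)
include h hgen hD hU

theorem isLeftRegular_D : IsLeftRegular D := by
  obtain ⟨j, hjt, hjw⟩ := h.exists_coeffHom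
  exact (h.isLaurentMap hjt hjw hD hU).isLeftRegular_D (h.isGeneralizedWeyl hjt hjw hgen)
    CoeffRing.isRegular_t

theorem not_isPrincipal_comap_leftMulRight :
    ¬((Submodule.span Aᵐᵒᵖ {D}).comap (leftMulRight (1 + U * w))).IsPrincipal := by
  obtain ⟨j, hjt, hjw⟩ := h.exists_coeffHom
  have hA := h.isGeneralizedWeyl hjt hjw hgen
  have hφ := h.isLaurentMap hjt hjw hD hU
  have hw : φ w = single 1 CoeffRing.w := by rw [← hjw]; exact hφ.map_coeff _
  rintro ⟨f, hf⟩
  have hspan := (h.comap_leftMulRight_eq_span (NeZero.ne l) (NeZero.ne μ)).symm.trans hf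
  have mem_span {x : A} (hx : x ∈ Submodule.span Aᵐᵒᵖ {D * D, secondGenerator l μ D U w}) :
      ∃ y, f * y = x := by
    rwa [hspan, ← range_leftMulRight] at hx
  obtain ⟨v, hv⟩ := mem_comap_leftMulRight.1 (hf ▸ Submodule.mem_span_singleton_self f)
  exact not_exists_common_left_factor hA hφ hw hv
    ⟨mem_span (Submodule.subset_span (.inl rfl)), mem_span (Submodule.subset_span (.inr rfl))⟩

end RightIdeal

end IsDownUpTriple

namespace DownUp

/-! ### The presentation of `A(α, β, γ)` -/

section Presentation

variable {K : Type} [Field K] {α β γ : K}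

theorem D_mul_U_mul_U : D K α β γ * U K α β γ * U K α β γ =
    α • (U K α β γ * D K α β γ * U K α β γ) + β • (U K α β γ * U K α β γ * D K α β γ) +
      γ • U K α β γ := by
  simpa only [D, U, map_mul, map_add, map_smul] using
    RingQuot.mkAlgHom_rel K (DownUpRel.rel1 (K := K) (a := α) (b := β) (g := γ))

theorem D_mul_D_mul_U : D K α β γ * D K α β γ * U K α β γ =
    α • (D K α β γ * U K α β γ * D K α β γ) + β • (U K α β γ * D K α β γ * D K α β γ) +
      γ • D K α β γ := by
  simpa only [D, U, map_mul, map_add, map_smul] using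
    RingQuot.mkAlgHom_rel K (DownUpRel.rel2 (K := K) (a := α) (b := β) (g := γ))

theorem adjoin_D_U : Algebra.adjoin K {D K α β γ, U K α β γ} = ⊤ := by
  have hrange : ({D K α β γ, U K α β γ} : Set (DownUp K α β γ)) =
      RingQuot.mkAlgHom K (DownUpRel K α β γ) '' Set.range (FreeAlgebra.ι K) := by
    rw [← Matrix.range_cons_cons_empty _ _ ![], ← Set.range_comp]
    congr 1
    ext i
    fin_cases i <;> rfl
  rw [hrange, ← AlgHom.map_adjoin, FreeAlgebra.adjoin_range_ι, Algebra.map_top,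
    AlgHom.range_eq_top]
  exact RingQuot.mkAlgHom_surjective K _

theorem exists_algHom {B : Type*} [Semiring B] [Algebra K B] {d u : B}
    (h₁ : d * u * u = α • (u * d * u) + β • (u * u * d) + γ • u)
    (h₂ : d * d * u = α • (d * u * d) + β • (u * d * d) + γ • d) :
    ∃ φ : DownUp K α β γ →ₐ[K] B, φ (D K α β γ) = d ∧ φ (U K α β γ) = u := by
  have hrel ⦃x y⦄ (hxy : DownUpRel K α β γ x y) :
      FreeAlgebra.lift K ![d, u] x = FreeAlgebra.lift K ![d, u] y := by
    rcases hxy with _ | _ <;> simpa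
  exact ⟨RingQuot.liftAlgHom K ⟨FreeAlgebra.lift K ![d, u], hrel⟩, by simp [D], by simp [U]⟩

instance : InvariantBasisNumber (DownUp K α β γ) := by
  obtain ⟨ε, -⟩ :=
    exists_algHom (α := α) (β := β) (γ := γ) (d := (0 : K)) (u := 0) (by simp) (by simp)
  exact invariantBasisNumber_of_ringHom (ε : DownUp K α β γ →+* K)

open SkewMonoidAlgebra in
theorem exists_algHom_skewMonoidAlgebra {R G : Type*} [CommRing R] [Algebra K R] [Group G]
    [MulSemiringAction G R] [SMulCommClass G K R] {s : G} {t : R}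
    (ht : s • s • t = α • s • t + β • t) :
    ∃ φ : DownUp K α β 0 →ₐ[K] SkewMonoidAlgebra R G,
      φ (D K α β 0) = single s 1 ∧ φ (U K α β 0) = single s⁻¹ t := by
  have hst : s • t = α • t + β • s⁻¹ • t := by
    have := congrArg (s⁻¹ • ·) ht
    simpa only [inv_smul_smul, smul_add, smul_comm s⁻¹ (_ : K)] using this
  apply exists_algHom
  · simp only [single_mul_single, smul_single, mul_one, one_mul, mul_inv_cancel, inv_mul_cancel,
      inv_mul_cancel_right, smul_one, one_smul, ← single_add, zero_smul, add_zero]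
    rw [hst, add_mul, smul_mul_assoc, smul_mul_assoc, mul_comm (s⁻¹ • t)]
  · simp only [single_mul_single, smul_single, mul_one, one_mul, mul_inv_cancel, inv_mul_cancel,
      mul_inv_cancel_right, smul_one, ← single_add, zero_smul, add_zero, mul_smul, ht]

end Presentation

theorem isDownUpTriple {K : Type} [Field K] (l μ : K) :
    IsDownUpTriple l μ (D K (l + μ) (-(l * μ)) 0)
    (U K (l + μ) (-(l * μ)) 0) (omega0 K (l + μ) (-(l * μ)) l) where
  D_mul_U := (add_sub_cancel _ _).symm
  w_mul_U := by
    rw [omega0, sub_mul, D_mul_U_mul_U, mul_sub, smul_mul_assoc, mul_smul_comm]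
    simp only [mul_assoc]
    module
  D_mul_w := by
    rw [omega0, mul_sub, ← mul_assoc, D_mul_D_mul_U, sub_mul, smul_mul_assoc, mul_smul_comm]
    simp only [mul_assoc]
    module

end DownUp

theorem downUp_gamma_zero_explicit_ideal_general
    (K : Type) [Field K] (α β lam μ : K) (hβ : β ≠ 0)
    (hsum : lam + μ = α) (hprod : lam * μ = -β) :
    idealK' K α β lam =
      Submodule.span (DownUp K α β 0)ᵐᵒᵖ
        {DownUp.D K α β 0 * DownUp.D K α β 0,
         DownUp.D K α β 0 * DownUp.U K α β 0 * omega0 K α β lam +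
           (lam⁻¹ * μ) • (omega0 K α β lam * omega0 K α β lam) +
           (μ ^ 2) • DownUp.D K α β 0} ∧
    IsStablyFreeRight (DownUp K α β 0) (idealK' K α β lam) ∧
    ¬ Module.Free (DownUp K α β 0)ᵐᵒᵖ (idealK' K α β lam) := by
  obtain rfl : β = -(lam * μ) := by rw [hprod, neg_neg]
  subst hsum
  have : NeZero lam := ⟨left_ne_zero_of_mul (neg_ne_zero.1 hβ)⟩
  have : NeZero μ := ⟨right_ne_zero_of_mul (neg_ne_zero.1 hβ)⟩
  have h := DownUp.isDownUpTriple lam μ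
  obtain ⟨φ, hD, hU⟩ :=
    DownUp.exists_algHom_skewMonoidAlgebra (CoeffRing.smul_smul_t (l := lam) (μ := μ))
  obtain ⟨e⟩ := nonempty_comap_leftMulRight_prod_linearEquiv (h.row_mul_column (NeZero.ne μ))
    (h.isLeftRegular_D DownUp.adjoin_D_U hD hU)
  refine ⟨h.comap_leftMulRight_eq_span (NeZero.ne lam) (NeZero.ne μ),
    isStablyFreeRight_of_prod e, fun hfree => ?_⟩
  exact h.not_isPrincipal_comap_leftMulRight DownUp.adjoin_D_U hD hU
    (isPrincipal_of_free_of_prod_linearEquiv (idealK' K _ _ lam) (rightBasis _) e)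

/-- In `A = A(α,β,0)` with `β ≠ 0` and `λ, μ` the roots of `t² − αt − β`,
set `ω = DU − λUD` and `K' = {f ∈ A : (1 + Uω)f ∈ DA}`. Then
`K' = D²A + (DUω + λ⁻¹μω² + μ²D)A`, and `K'` is a right ideal of `A` that is stably free
but not free as a right `A`-module. -/
theorem downUp_gamma_zero_explicit_ideal
    (K : Type) [Field K] [CharZero K] (α β lam μ : K) (hβ : β ≠ 0)
    (hsum : lam + μ = α) (hprod : lam * μ = -β) :
    idealK' K α β lam =
      Submodule.span (DownUp K α β 0)ᵐᵒᵖ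
        {DownUp.D K α β 0 * DownUp.D K α β 0,
         DownUp.D K α β 0 * DownUp.U K α β 0 * omega0 K α β lam +
           (lam⁻¹ * μ) • (omega0 K α β lam * omega0 K α β lam) +
           (μ ^ 2) • DownUp.D K α β 0} ∧
    IsStablyFreeRight (DownUp K α β 0) (idealK' K α β lam) ∧
    ¬ Module.Free (DownUp K α β 0)ᵐᵒᵖ (idealK' K α β lam) := by
  exact downUp_gamma_zero_explicit_ideal_general K α β lam μ hβ hsum hprod
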